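/- arXiv:1710.01936 — 2 statements merged into one kernel-verified Lean document; each statement's English description precedes it below -/
import Mathlib

section
/- Pollard's theorem for k-fold sumsets: for prime p, subsets A_1,...,A_k of Z_p of sizes a_1,...,a_k, and every integer r ≥ 1, Σ_{i=1}^r n_i(A_1,...,A_k) ≥ Σ_{i=1}^r n_i([a_1],...,[a_k]), where [a] := {0,1,...,a-1} ⊆ Z_p and n_i(A_1,...,A_k) := |{x ∈ Z_p : x has at least i representations as x_1+...+x_k with x_j ∈ A_j}|. -/
/-- Number of representations of `x` as `x 1 + ... + x k` with `x j ∈ A j`. -/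
def sigmaCount {p : ℕ} {k : ℕ} (x : ZMod p) (A : Fin k → Finset (ZMod p)) : ℕ :=
  ((Fintype.piFinset A).filter (fun y => x = ∑ j : Fin k, y j)).card

/-- `ncount i A` is the number of `x ∈ ZMod p` with at least `i` representations. -/
def ncount {p : ℕ} [NeZero p] {k : ℕ} (i : ℕ) (A : Fin k → Finset (ZMod p)) : ℕ :=
  (Finset.univ.filter (fun x : ZMod p => i ≤ sigmaCount x A)).card

/-- The interval `[a] = {0, 1, ..., a-1}` in `ZMod p`. -/
def initInterval (p a : ℕ) : Finset (ZMod p) :=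
  (Finset.range a).image (fun j : ℕ => (j : ZMod p))

/-!
Both sides are sums of truncations `∑ x, min r (σ x)` of the representation function `σ`, so the
claim is that replacing each `Aⱼ` by the interval of the same size can only make `σ` less spread
out, in the sense of majorization. For two sets this is Pollard's original inequality. Its lower
bound follows from Dyson's transform: translate `A` to meet but not contain `B` (possible as `p` is
prime), then replace `(A, B)` by `(A ∪ B, A ∩ B)` and `(A \ B, B \ A)`.

For `k` sets, add one summand `B` at a time. The sum of the convolution `f ∗ 1_B` over a set `M`
equals `∑ f · (1_M ∗ 1_{-B})`. Here the induction hypothesis majorizes `f` by its interval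
counterpart `g`, and the two-set case majorizes the other factor by that of intervals. Both
majorants are symmetric and unimodal, so a translation makes them similarly ordered, and the
rearrangement inequality bounds the sum by `∑ g · (1_{M'} ∗ 1_{-B'})` for an interval `B'` and a
translate `M'` of an interval.
-/

namespace Pollard

open Finset
open scoped Pointwise

section Majorization

variable {α : Type*} [Fintype α] {f f' g g' : α → ℕ}

/-- `f` is majorized by `g`: both have the same sum, and `f` is at least as spread out as `g`.
Instead of the usual sums of the largest values, spread is measured by the truncated sums
`∑ x, min r (f x)`, which are the sums of the `nᵢ` bounded in Pollard's theorem. -/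
def Majorized (f g : α → ℕ) : Prop :=
  ∑ x, f x = ∑ x, g x ∧ ∀ r, ∑ x, min r (g x) ≤ ∑ x, min r (f x)

lemma sum_tsub_add_sum_min (f : α → ℕ) (r : ℕ) :
    ∑ x, (f x - r) + ∑ x, min r (f x) = ∑ x, f x := by
  simp only [← sum_add_distrib, min_comm r, tsub_add_min]

lemma Majorized.sum_tsub_le (h : Majorized f g) (r : ℕ) : ∑ x, (f x - r) ≤ ∑ x, (g x - r) := by
  have hf := sum_tsub_add_sum_min f r
  have hg := sum_tsub_add_sum_min g r
  have hsum := h.1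
  have hmin := h.2 r
  lia

lemma Majorized.comp_equiv (h : Majorized f g) (e : α ≃ α) : Majorized f (g ∘ e) :=
  ⟨h.1.trans (Equiv.sum_comp e g).symm, fun r ↦
    (Equiv.sum_comp e fun x ↦ min r (g x)).trans_le (h.2 r)⟩

lemma sum_le_card_mul_add_sum_tsub (f : α → ℕ) (M : Finset α) (r : ℕ) :
    ∑ x ∈ M, f x ≤ #M * r + ∑ x, (f x - r) :=
  calc ∑ x ∈ M, f x ≤ ∑ x ∈ M, (r + (f x - r)) := sum_le_sum fun _ _ ↦ le_add_tsub
    _ = #M * r + ∑ x ∈ M, (f x - r) := by rw [sum_add_distrib, sum_const, smul_eq_mul]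
    _ ≤ #M * r + ∑ x, (f x - r) := by gcongr; exact subset_univ M

lemma sum_filter_lt_eq_card_mul_add_sum_tsub (f : α → ℕ) (r : ℕ) :
    ∑ x with r < f x, f x = #{x | r < f x} * r + ∑ x, (f x - r) := by
  have hsupport : ∑ x with r < f x, (f x - r) = ∑ x, (f x - r) :=
    sum_filter_of_ne fun _ _ hx ↦ Nat.lt_of_sub_ne_zero hx
  rw [← hsupport, ← smul_eq_mul, ← sum_const, ← sum_add_distrib]
  exact sum_congr rfl fun x hx ↦ (add_tsub_cancel_of_le (mem_filter.mp hx).2.le).symm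

lemma majorized_of_forall_sum_le (hsum : ∑ x, f x = ∑ x, g x)
    (h : ∀ M : Finset α, ∃ M' : Finset α, #M' = #M ∧ ∑ x ∈ M, f x ≤ ∑ x ∈ M', g x) :
    Majorized f g := by
  refine ⟨hsum, fun r ↦ ?_⟩
  obtain ⟨M, hcard, hle⟩ := h {x | r < f x}
  have htsub : ∑ x, (f x - r) ≤ ∑ x, (g x - r) := by
    have hf := sum_filter_lt_eq_card_mul_add_sum_tsub f r
    have hg := sum_le_card_mul_add_sum_tsub g M r
    rw [hcard] at hg
    lia
  have hf := sum_tsub_add_sum_min f r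
  have hg := sum_tsub_add_sum_min g r
  lia

/-- The superlevel set `{x | i ≤ f x}`; its cardinality is the `nᵢ` of Pollard's theorem when `f`
counts representations. -/
def superlevel (f : α → ℕ) (i : ℕ) : Finset α := {x | i ≤ f x}

@[simp]
lemma mem_superlevel {i : ℕ} {x : α} : x ∈ superlevel f i ↔ i ≤ f x := by simp [superlevel]

lemma superlevel_antitone (f : α → ℕ) : Antitone (superlevel f) := fun _ _ hij _ hx ↦
  mem_superlevel.mpr (hij.trans (mem_superlevel.mp hx))

lemma sum_card_superlevel (f : α → ℕ) (k l : ℕ) :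
    ∑ i ∈ Ioc k l, #(superlevel f i) = ∑ x, (min l (f x) - k) := by
  simp only [superlevel, card_filter]
  rw [sum_comm]
  refine sum_congr rfl fun x _ ↦ ?_
  have hIoc : {i ∈ Ioc k l | i ≤ f x} = Ioc k (min l (f x)) := by grind
  rw [← card_filter, hIoc, Nat.card_Ioc]

lemma sum_min_card_superlevel_le (f : α → ℕ) {r N : ℕ} (hr : r ≤ N) (w : ℕ) :
    ∑ i ∈ Ioc 0 N, min #(superlevel f i) w ≤ r * w + ∑ x, (f x - r) := by
  rw [← sum_Ioc_consecutive _ r.zero_le hr]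
  gcongr
  · calc ∑ i ∈ Ioc 0 r, min #(superlevel f i) w ≤ ∑ _i ∈ Ioc 0 r, w :=
          sum_le_sum fun _ _ ↦ min_le_right _ _
      _ = r * w := by simp
  · calc ∑ i ∈ Ioc r N, min #(superlevel f i) w ≤ ∑ i ∈ Ioc r N, #(superlevel f i) :=
          sum_le_sum fun _ _ ↦ min_le_left _ _
      _ = ∑ x, (min N (f x) - r) := sum_card_superlevel f r N
      _ ≤ ∑ x, (f x - r) := by gcongr; exact min_le_right _ _

lemma exists_sum_min_card_superlevel_eq {N : ℕ} (hf : ∀ x, f x ≤ N) (w : ℕ) :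
    ∃ r ≤ N, ∑ i ∈ Ioc 0 N, min #(superlevel f i) w = r * w + ∑ x, (f x - r) := by
  -- The cardinalities decrease in `i`; `r` is where they drop below `w`.
  let P (i : ℕ) : Prop := w ≤ #(superlevel f i)
  set r := Nat.findGreatest P N with hr
  have hrN : r ≤ N := Nat.findGreatest_le N
  refine ⟨r, hrN, ?_⟩
  have hlow : ∑ i ∈ Ioc 0 r, min #(superlevel f i) w = r * w := by
    have hle : ∀ i ∈ Ioc 0 r, min #(superlevel f i) w = w := fun i hi ↦ by
      obtain ⟨hi0, hir⟩ := mem_Ioc.mp hi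
      have hwr : P r := Nat.findGreatest_of_ne_zero hr.symm (hi0.trans_le hir).ne'
      exact min_eq_right (hwr.trans (card_le_card (superlevel_antitone f hir)))
    simp [sum_congr rfl hle]
  have hhigh : ∑ i ∈ Ioc r N, min #(superlevel f i) w = ∑ x, (f x - r) := by
    have hle : ∀ i ∈ Ioc r N, min #(superlevel f i) w = #(superlevel f i) := fun i hi ↦ by
      obtain ⟨hri, hiN⟩ := mem_Ioc.mp hi
      have hwi : ¬ P i := Nat.findGreatest_is_greatest hri hiN
      exact min_eq_left (not_le.mp hwi).le
    simp only [sum_congr rfl hle, sum_card_superlevel, min_eq_right (hf _)]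
  rw [← sum_Ioc_consecutive _ r.zero_le hrN, hlow, hhigh]

lemma Majorized.sum_min_card_superlevel_le (h : Majorized f g) {N : ℕ} (hg : ∀ x, g x ≤ N)
    (w : ℕ) :
    ∑ i ∈ Ioc 0 N, min #(superlevel f i) w ≤ ∑ i ∈ Ioc 0 N, min #(superlevel g i) w := by
  obtain ⟨r, hr, heq⟩ := exists_sum_min_card_superlevel_eq hg w
  calc ∑ i ∈ Ioc 0 N, min #(superlevel f i) w ≤ r * w + ∑ x, (f x - r) :=
        Pollard.sum_min_card_superlevel_le f hr w
    _ ≤ r * w + ∑ x, (g x - r) := Nat.add_le_add_left (h.sum_tsub_le r) _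
    _ = ∑ i ∈ Ioc 0 N, min #(superlevel g i) w := heq.symm

lemma sum_mul_eq_sum_card_superlevel_inter [DecidableEq α] {N : ℕ} (hf : ∀ x, f x ≤ N)
    (hg : ∀ x, g x ≤ N) :
    ∑ x, f x * g x =
      ∑ i ∈ Ioc 0 N, ∑ j ∈ Ioc 0 N, #(superlevel f i ∩ superlevel g j) := by
  have hlayer : ∀ m ≤ N, m = ∑ i ∈ Ioc 0 N, if i ≤ m then 1 else 0 := fun m hm ↦ by
    have hIoc : {i ∈ Ioc 0 N | i ≤ m} = Ioc 0 m := by grind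
    rw [← card_filter, hIoc, Nat.card_Ioc, tsub_zero]
  have hpoint : ∀ x, f x * g x = ∑ i ∈ Ioc 0 N, ∑ j ∈ Ioc 0 N,
      if i ≤ f x ∧ j ≤ g x then 1 else 0 := fun x ↦ by
    conv_lhs => rw [hlayer _ (hf x), hlayer _ (hg x), sum_mul_sum]
    simp only [ite_and, ite_mul, one_mul, zero_mul]
  simp only [hpoint, superlevel, ← filter_and, card_filter]
  rw [sum_comm]
  exact sum_congr rfl fun _ _ ↦ sum_comm

lemma card_superlevel_inter_of_monovary [DecidableEq α] (h : Monovary g f) (i j : ℕ) :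
    #(superlevel f i ∩ superlevel g j) = min #(superlevel f i) #(superlevel g j) := by
  by_cases hsub : superlevel f i ⊆ superlevel g j
  · rw [inter_eq_left.mpr hsub, min_eq_left (card_le_card hsub)]
  · obtain ⟨x, hxf, hxg⟩ := not_subset.mp hsub
    have hsup : superlevel g j ⊆ superlevel f i := fun y hy ↦ by
      rw [mem_superlevel] at *
      by_contra! hlt
      exact hxg (hy.trans (h (hlt.trans_le hxf)))
    rw [inter_eq_right.mpr hsup, min_eq_right (card_le_card hsup)]

lemma Majorized.sum_mul_le_sum_mul (hf : Majorized f f') (hg : Majorized g g')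
    (h : Monovary g' f') : ∑ x, f x * g x ≤ ∑ x, f' x * g' x := by
  classical
  obtain ⟨N, hN⟩ : ∃ N, ∀ x, f x ≤ N ∧ f' x ≤ N ∧ g x ≤ N ∧ g' x ≤ N := by
    refine ⟨∑ x, (f x + f' x + g x + g' x), fun x ↦ ?_⟩
    have := single_le_sum_of_canonicallyOrdered (f := fun x ↦ f x + f' x + g x + g' x) (mem_univ x)
    lia
  choose hfN hfN' hgN hgN' using hN
  let L (u : α → ℕ) (i : ℕ) : ℕ := #(superlevel u i)
  calc ∑ x, f x * g x
      = ∑ i ∈ Ioc 0 N, ∑ j ∈ Ioc 0 N, #(superlevel f i ∩ superlevel g j) :=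
        sum_mul_eq_sum_card_superlevel_inter hfN hgN
    _ ≤ ∑ i ∈ Ioc 0 N, ∑ j ∈ Ioc 0 N, min (L g j) (L f i) := by
        gcongr with i _ j _
        exact le_min (card_le_card inter_subset_right) (card_le_card inter_subset_left)
    _ ≤ ∑ i ∈ Ioc 0 N, ∑ j ∈ Ioc 0 N, min (L g' j) (L f i) :=
        sum_le_sum fun _ _ ↦ hg.sum_min_card_superlevel_le hgN' _
    _ = ∑ j ∈ Ioc 0 N, ∑ i ∈ Ioc 0 N, min (L f i) (L g' j) := by
        rw [sum_comm]; simp only [min_comm]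
    _ ≤ ∑ j ∈ Ioc 0 N, ∑ i ∈ Ioc 0 N, min (L f' i) (L g' j) :=
        sum_le_sum fun _ _ ↦ hf.sum_min_card_superlevel_le hfN' _
    _ = ∑ i ∈ Ioc 0 N, ∑ j ∈ Ioc 0 N, #(superlevel f' i ∩ superlevel g' j) := by
        rw [sum_comm]; simp only [card_superlevel_inter_of_monovary h, L]
    _ = ∑ x, f' x * g' x := (sum_mul_eq_sum_card_superlevel_inter hfN' hgN').symm

end Majorization

lemma eq_univ_of_forall_add_mem {G : Type*} [AddGroup G] [Fintype G] [Fact (Nat.card G).Prime]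
    {A : Finset G} (hA : A.Nonempty) {g : G} (hg : g ≠ 0) (h : ∀ a ∈ A, a + g ∈ A) : A = univ := by
  obtain ⟨a, ha⟩ := hA
  have hmultiple (n : ℕ) : a + n • g ∈ A := by
    induction n with
    | zero => simpa using ha
    | succ n ih => simpa only [succ_nsmul, add_assoc] using h _ ih
  refine eq_univ_of_forall fun x ↦ ?_
  obtain ⟨n, hn⟩ := mem_multiples_of_prime_card rfl hg (g' := -a + x)
  have hx : n • g = -a + x := hn
  simpa [hx] using hmultiple n

section AddConvolution

variable {G : Type*} [AddCommGroup G] [DecidableEq G]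

lemma addConvolution_comm (A B : Finset G) : A.addConvolution B = B.addConvolution A := by
  funext x
  exact card_equiv (Equiv.prodComm G G) (by simp [and_comm, add_comm])

lemma addConvolution_union_left {A A' : Finset G} (h : Disjoint A A') (B : Finset G) :
    (A ∪ A').addConvolution B = A.addConvolution B + A'.addConvolution B := by
  funext x
  simp only [addConvolution, union_product, filter_union, Pi.add_apply]
  exact card_union_of_disjoint (disjoint_filter_filter (disjoint_product.mpr (.inl h)))

lemma addConvolution_union_right {B B' : Finset G} (A : Finset G) (h : Disjoint B B') :
    A.addConvolution (B ∪ B') = A.addConvolution B + A.addConvolution B' := by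
  simp only [addConvolution_comm A, addConvolution_union_left h]

lemma addConvolution_insert_left_le (a : G) (A B : Finset G) (x : G) :
    (insert a A).addConvolution B x ≤
      ({a} : Finset G).addConvolution B x + A.addConvolution B x := by
  simp only [addConvolution, insert_eq a A, union_product, filter_union]
  exact card_union_le _ _

lemma addConvolution_insert_right_le (A B : Finset G) (b x : G) :
    A.addConvolution (insert b B) x ≤ A.addConvolution {b} x + A.addConvolution B x := by
  simp only [addConvolution_comm A]
  exact addConvolution_insert_left_le b B A x

lemma addConvolution_mono_right (A : Finset G) {B B' : Finset G} (h : B ⊆ B') (x : G) :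
    A.addConvolution B x ≤ A.addConvolution B' x :=
  card_le_card (filter_subset_filter _ (product_subset_product_right h))

lemma addConvolution_dyson (A B : Finset G) :
    A.addConvolution B =
      (A ∪ B).addConvolution (A ∩ B) + (A \ B).addConvolution (B \ A) := by
  have hA : A.addConvolution B = (A \ B).addConvolution B + (A ∩ B).addConvolution B := by
    rw [← addConvolution_union_left (disjoint_sdiff_inter A B), sdiff_union_inter]
  have hB : (A \ B).addConvolution B =
      (A \ B).addConvolution (B \ A) + (A \ B).addConvolution (A ∩ B) := by
    rw [inter_comm A B, ← addConvolution_union_right _ (disjoint_sdiff_inter B A),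
      sdiff_union_inter]
  have hunion : (A ∪ B).addConvolution (A ∩ B) =
      (A \ B).addConvolution (A ∩ B) + B.addConvolution (A ∩ B) := by
    rw [← addConvolution_union_left sdiff_disjoint, sdiff_union_self_eq_union]
  rw [hA, hB, hunion, addConvolution_comm (A ∩ B) B]
  abel

variable [Fintype G]

lemma sum_addConvolution (A B : Finset G) : ∑ x, A.addConvolution B x = #A * #B := by
  rw [← card_product]
  exact (card_eq_sum_card_fiberwise fun _ _ ↦ mem_univ _).symm

lemma sum_min_addConvolution_of_card_le (A : Finset G) {B : Finset G} {t : ℕ} (hB : #B ≤ t) :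
    ∑ x, min t (A.addConvolution B x) = #A * #B := by
  rw [← sum_addConvolution]
  exact sum_congr rfl fun _ _ ↦ min_eq_right (addConvolution_le_card_right.trans hB)

lemma sum_min_vadd_addConvolution (t : ℕ) (d : G) (A B : Finset G) :
    ∑ x, min t ((d +ᵥ A).addConvolution B x) = ∑ x, min t (A.addConvolution B x) := by
  simp only [vadd_addConvolution_eq_addConvolution_neg_add]
  exact Equiv.sum_comp (Equiv.addLeft (-d)) fun x ↦ min t (A.addConvolution B x)

lemma sum_min_addConvolution_union_inter_le (t : ℕ) (A B : Finset G) :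
    ∑ x, min t ((A ∪ B).addConvolution (A ∩ B) x) ≤ ∑ x, min t (A.addConvolution B x) := by
  rw [addConvolution_dyson A B]
  gcongr
  exact Nat.le_add_right _ _

lemma card_union_mul_card_inter_add_le {t : ℕ} {A B : Finset G} (ht : #(A ∩ B) ≤ t) :
    #(A ∪ B) * #(A ∩ B) + ∑ x, min (t - #(A ∩ B)) ((A \ B).addConvolution (B \ A) x) ≤
      ∑ x, min t (A.addConvolution B x) := by
  rw [← sum_min_addConvolution_of_card_le (A ∪ B) le_rfl, ← sum_add_distrib,
    addConvolution_dyson A B]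
  simp only [Pi.add_apply]
  exact sum_le_sum fun x _ ↦ by lia

lemma exists_vadd_inter_nonempty_not_subset [Fact (Nat.card G).Prime] {A B : Finset G}
    (hA : A.Nonempty) (hAuniv : A ≠ univ) (hB : 1 < #B) :
    ∃ d : G, ((d +ᵥ A) ∩ B).Nonempty ∧ ¬ B ⊆ d +ᵥ A := by
  by_contra! hsubset
  obtain ⟨b, hb, b', hb', hne⟩ := one_lt_card.mp hB
  refine hAuniv (eq_univ_of_forall_add_mem hA (sub_ne_zero.mpr hne) fun a ha ↦ ?_)
  have hmem : b' ∈ (b' - a) +ᵥ A := mem_vadd_finset.mpr ⟨a, ha, by simp⟩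
  obtain ⟨c, hc, hcb⟩ := mem_vadd_finset.mp (hsubset _ ⟨b', mem_inter.mpr ⟨hmem, hb'⟩⟩ hb)
  have hca : c = a + (b - b') := by rw [← hcb, vadd_eq_add]; abel
  exact hca ▸ hc

lemma add_mul_tsub_dyson {s u m : ℕ} (hu : u ≤ m) :
    (s + u) * (m + 2 * s - (s + u)) = (m + s) * s + u * (m - u) := by
  obtain ⟨w, rfl⟩ := Nat.exists_eq_add_of_le hu
  have hleft : u + w + 2 * s - (s + u) = w + s := by lia
  rw [hleft, Nat.add_sub_cancel_left]
  ring

lemma mul_card_add_card_sub_le_sum_min [Fact (Nat.card G).Prime] {A B : Finset G} {t : ℕ}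
    (hA : t ≤ #A) (hB : t ≤ #B) (hcard : #A + #B ≤ Fintype.card G + t) :
    t * (#A + #B - t) ≤ ∑ x, min t (A.addConvolution B x) := by
  induction hn : #B using Nat.strong_induction_on generalizing A B t with | _ n ih
  subst hn
  obtain rfl | ht := t.eq_zero_or_pos
  · simp
  obtain rfl | htB := hB.eq_or_lt
  · rw [sum_min_addConvolution_of_card_le A le_rfl, Nat.add_sub_cancel, mul_comm]
  have hAuniv : A ≠ univ := by rintro rfl; rw [card_univ] at hcard; lia
  obtain ⟨d, hmeet, hnot⟩ :=
    exists_vadd_inter_nonempty_not_subset (card_pos.mp (ht.trans_le hA)) hAuniv (B := B) (by lia)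
  rw [← sum_min_vadd_addConvolution t d A B]
  rw [← card_vadd_finset d A] at hA hcard ⊢
  set A' := d +ᵥ A
  have hmeet_pos : 0 < #(A' ∩ B) := hmeet.card_pos
  have hmeet_lt : #(A' ∩ B) < #B :=
    card_lt_card ⟨inter_subset_right, fun h ↦ hnot (h.trans inter_subset_left)⟩
  have hunion := card_union_add_card_inter A' B
  obtain hts | hst := le_or_gt t #(A' ∩ B)
  · rw [← hunion]
    exact (ih _ hmeet_lt (by lia) hts (by lia) rfl).trans
      (sum_min_addConvolution_union_inter_le t A' B)
  · obtain ⟨u, rfl⟩ := Nat.exists_eq_add_of_le hst.le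
    have hA' := card_sdiff_add_card_inter A' B
    have hB' := card_sdiff_add_card_inter B A'
    rw [inter_comm B A'] at hB'
    have hsum : #A' + #B = #(A' \ B) + #(B \ A') + 2 * #(A' ∩ B) := by lia
    have hrest := ih #(B \ A') (by lia) (A := A' \ B) (t := u) (by lia) (by lia) (by lia) rfl
    have hdyson := card_union_mul_card_inter_add_le hst.le
    rw [Nat.add_sub_cancel_left] at hdyson
    have hcard_union : #(A' \ B) + #(B \ A') + #(A' ∩ B) = #(A' ∪ B) := by lia
    rw [hsum, add_mul_tsub_dyson (by lia), hcard_union]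
    exact (Nat.add_le_add_left hrest _).trans hdyson

lemma mul_min_card_le_sum_min [Fact (Nat.card G).Prime] {A B : Finset G} {t : ℕ}
    (hA : t ≤ #A) (hB : t ≤ #B) :
    t * min (Fintype.card G) (#A + #B - t) ≤ ∑ x, min t (A.addConvolution B x) := by
  obtain h | h := le_total (#A + #B) (Fintype.card G + t)
  · exact (Nat.mul_le_mul_left _ (min_le_right _ _)).trans
      (mul_card_add_card_sub_le_sum_min hA hB h)
  · have hAG : #A ≤ Fintype.card G := card_le_univ A
    obtain ⟨B', hB', hcard⟩ :=
      exists_subset_card_eq (s := B) (n := Fintype.card G + t - #A) (by lia)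
    calc t * min (Fintype.card G) (#A + #B - t) ≤ t * (#A + #B' - t) :=
          Nat.mul_le_mul_left _ (by lia)
      _ ≤ ∑ x, min t (A.addConvolution B' x) :=
          mul_card_add_card_sub_le_sum_min hA (by lia) (by lia)
      _ ≤ ∑ x, min t (A.addConvolution B x) := by
          gcongr with x
          exact addConvolution_mono_right A hB' x

end AddConvolution

section Convolve

variable {G : Type*} [AddCommGroup G]

/-- The convolution of `f` with the indicator function of `B`: if `f` counts representations, then
`convolve f B` counts those with one more summand, taken from `B`. -/
def convolve (f : G → ℕ) (B : Finset G) (x : G) : ℕ := ∑ b ∈ B, f (x - b)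

lemma convolve_convolve_single [DecidableEq G] (A B : Finset G) :
    convolve (convolve (Pi.single 0 1) A) B = A.addConvolution B := by
  funext x
  simp only [convolve, addConvolution, card_filter, sum_product, Pi.single_apply]
  rw [sum_comm]
  refine sum_congr rfl fun a _ ↦ sum_congr rfl fun b _ ↦ if_congr ?_ rfl rfl
  rw [sub_sub, sub_eq_zero, eq_comm, add_comm]

variable [Fintype G]

lemma sum_convolve (f : G → ℕ) (B : Finset G) : ∑ x, convolve f B x = (∑ x, f x) * #B := by
  simp only [convolve]
  rw [sum_comm, mul_comm, ← smul_eq_mul, ← sum_const]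
  exact sum_congr rfl fun b _ ↦ Equiv.sum_comp (Equiv.subRight b) f

lemma sum_finset_convolve [DecidableEq G] (f : G → ℕ) (B M : Finset G) :
    ∑ x ∈ M, convolve f B x = ∑ y, f y * M.addConvolution (-B) y := by
  simp only [convolve]
  rw [← sum_product', ← sum_fiberwise _ fun xb ↦ xb.1 - xb.2]
  refine sum_congr rfl fun y _ ↦ ?_
  rw [← card_sub_eq, mul_comm, ← smul_eq_mul, ← sum_const]
  exact sum_congr rfl fun xb hxb ↦ congrArg f (mem_filter.mp hxb).2

end Convolve

section InitInterval

variable {n : ℕ}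

lemma natCast_injOn_range {b : ℕ} (hb : b ≤ n) :
    Set.InjOn (fun j : ℕ ↦ (j : ZMod n)) (range b) := by
  intro i hi j hj h
  simp only [coe_range, Set.mem_Iio] at hi hj
  exact ((ZMod.natCast_eq_natCast_iff i j n).mp h).eq_of_lt_of_lt (hi.trans_le hb) (hj.trans_le hb)

lemma card_initInterval {b : ℕ} (hb : b ≤ n) : #(initInterval n b) = b := by
  rw [initInterval, card_image_of_injOn (natCast_injOn_range hb), card_range]

lemma card_initInterval_le (n b : ℕ) : #(initInterval n b) ≤ b :=
  card_image_le.trans_eq (card_range b)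

lemma initInterval_add_one (n b : ℕ) :
    initInterval n (b + 1) = insert (b : ZMod n) (initInterval n b) := by
  rw [initInterval, range_add_one, image_insert, initInterval]

lemma initInterval_add_one' (n b : ℕ) :
    initInterval n (b + 1) = insert 0 ((1 : ZMod n) +ᵥ initInterval n b) := by
  rw [initInterval, range_add_one', map_eq_image, image_insert, image_image, initInterval,
    ← image_vadd, image_image, Nat.cast_zero]
  exact congrArg _ (image_congr fun j _ ↦ (Nat.cast_succ j).trans (add_comm _ _))

lemma neg_initInterval (n b : ℕ) :
    -initInterval n b = (1 - b : ZMod n) +ᵥ initInterval n b := by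
  induction b with
  | zero => simp [initInterval]
  | succ b ih =>
    rw [initInterval_add_one', vadd_finset_insert, vadd_vadd, ← initInterval_add_one',
      initInterval_add_one, neg_insert, ih]
    simp [neg_add_eq_sub]

lemma addConvolution_initInterval_add_one_pos {a b : ℕ} {x : ZMod n}
    (hx : 0 < ((1 : ZMod n) +ᵥ initInterval n a).addConvolution (initInterval n b) x) :
    0 < ({0} : Finset (ZMod n)).addConvolution (initInterval n (b + 1)) x +
      ((1 : ZMod n) +ᵥ initInterval n a).addConvolution {(b : ZMod n)} x := by
  rw [add_pos_iff]
  simp only [addConvolution_pos, mem_add, initInterval, mem_vadd_finset, mem_image, mem_range,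
    mem_singleton] at hx ⊢
  obtain ⟨_, ⟨_, ⟨i, hi, rfl⟩, rfl⟩, _, ⟨j, hj, rfl⟩, rfl⟩ := hx
  obtain h | h := le_or_gt (1 + i + j) b
  · exact .inl ⟨0, rfl, _, ⟨1 + i + j, by lia, rfl⟩, by simp⟩
  · obtain ⟨e, he⟩ := Nat.exists_eq_add_of_lt h
    refine .inr ⟨_, ⟨_, ⟨e, by lia, rfl⟩, rfl⟩, _, rfl, ?_⟩
    have := congrArg (Nat.cast : ℕ → ZMod n) he
    push_cast at this
    simp only [vadd_eq_add, this]
    ring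

lemma vadd_addConvolution_neg_initInterval (d : ZMod n) (A : Finset (ZMod n)) (b : ℕ) :
    ((d + (b - 1)) +ᵥ A).addConvolution (-initInterval n b) =
      fun x ↦ A.addConvolution (initInterval n b) (-d + x) := by
  funext x
  rw [neg_initInterval, vadd_addConvolution_eq_addConvolution_neg_add, addConvolution_comm,
    vadd_addConvolution_eq_addConvolution_neg_add, addConvolution_comm]
  congr 1
  ring

variable [NeZero n]

lemma sum_min_initInterval_add_one_le (t a b : ℕ) :
    ∑ x, min (t + 1) ((initInterval n (a + 1)).addConvolution (initInterval n (b + 1)) x) ≤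
      a + b + 1 + ∑ x, min t ((initInterval n a).addConvolution (initInterval n b) x) := by
  -- Representations using the first element `0` or the last element `b` are counted by `u`, which
  -- is positive wherever another representation remains, and so absorbs the extra `1`.
  set A' := (1 : ZMod n) +ᵥ initInterval n a
  set u := fun x ↦ ({0} : Finset (ZMod n)).addConvolution (initInterval n (b + 1)) x +
    A'.addConvolution {(b : ZMod n)} x
  set v := A'.addConvolution (initInterval n b)
  have hsplit (x : ZMod n) :
      (initInterval n (a + 1)).addConvolution (initInterval n (b + 1)) x ≤ u x + v x := by
    rw [initInterval_add_one']
    refine (addConvolution_insert_left_le 0 A' _ x).trans ?_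
    have := addConvolution_insert_right_le A' (initInterval n b) (b : ZMod n) x
    rw [← initInterval_add_one] at this
    grind
  have hu : ∑ x, u x ≤ a + b + 1 := by
    have hA' : #A' ≤ a := (card_vadd_finset _ _).trans_le (card_initInterval_le n a)
    have hb := card_initInterval_le n (b + 1)
    simp only [u, sum_add_distrib, sum_addConvolution, card_singleton]
    lia
  rw [← sum_min_vadd_addConvolution t 1]
  calc ∑ x, min (t + 1) ((initInterval n (a + 1)).addConvolution (initInterval n (b + 1)) x)
      ≤ ∑ x, (u x + min t (v x)) := by
        refine sum_le_sum fun x _ ↦ ?_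
        have hpos : 0 < v x → 0 < u x := addConvolution_initInterval_add_one_pos
        have := hsplit x
        lia
    _ ≤ a + b + 1 + ∑ x, min t (v x) := by
        rw [sum_add_distrib]
        exact Nat.add_le_add_right hu _

lemma sum_min_initInterval_le (t a b : ℕ) :
    ∑ x, min t ((initInterval n (t + a)).addConvolution (initInterval n (t + b)) x) ≤
      t * (t + a + b) := by
  induction t with
  | zero => simp
  | succ t ih =>
    rw [add_right_comm t 1 a, add_right_comm t 1 b]
    have := sum_min_initInterval_add_one_le (n := n) t (t + a) (t + b)
    linarith

lemma majorized_addConvolution_initInterval {p : ℕ} [Fact p.Prime] (A B : Finset (ZMod p)) :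
    Majorized (A.addConvolution B)
      ((initInterval p #A).addConvolution (initInterval p #B)) := by
  have : Fact (Nat.card (ZMod p)).Prime := by rwa [Nat.card_zmod]
  have hA : #A ≤ p := (card_le_univ A).trans_eq (ZMod.card p)
  have hB : #B ≤ p := (card_le_univ B).trans_eq (ZMod.card p)
  have hsum : ∑ x, A.addConvolution B x =
      ∑ x, (initInterval p #A).addConvolution (initInterval p #B) x := by
    simp only [sum_addConvolution, card_initInterval hA, card_initInterval hB]
  refine ⟨hsum, fun t ↦ ?_⟩
  by_cases ht : t ≤ #A ∧ t ≤ #B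
  · refine le_trans ?_ (mul_min_card_le_sum_min ht.1 ht.2)
    rw [← Nat.mul_min_mul_left]
    refine le_min ?_ ?_
    · refine (sum_le_card_nsmul univ _ t fun x _ ↦ min_le_left _ _).trans_eq ?_
      rw [smul_eq_mul, mul_comm, card_univ]
    · obtain ⟨a, ha⟩ := Nat.exists_eq_add_of_le ht.1
      obtain ⟨b, hb⟩ := Nat.exists_eq_add_of_le ht.2
      rw [ha, hb]
      refine (sum_min_initInterval_le t a b).trans_eq ?_
      congr 1
      lia
  · have hle (x : ZMod p) : A.addConvolution B x ≤ t := by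
      have := addConvolution_le_card_left (A := A) (B := B) (x := x)
      have := addConvolution_le_card_right (A := A) (B := B) (x := x)
      lia
    simp only [min_eq_right (hle _), hsum]
    exact sum_le_sum fun x _ ↦ min_le_right _ _

end InitInterval

section SymmDecreasing

variable {n : ℕ} {c : ℤ} {g : ZMod n → ℕ}

/-- `g` is symmetric about `c / 2` and decreases away from it. The centre is doubled so that it can
be a half-integer, and arguments are integers within `n / 2` of it, one period of `g`. -/
def SymmDecreasing (c : ℤ) (g : ZMod n → ℕ) : Prop :=
  ∀ x y : ℤ, |2 * x - c| ≤ |2 * y - c| → |2 * y - c| ≤ n → g (y : ZMod n) ≤ g (x : ZMod n)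

lemma SymmDecreasing.translate (hg : SymmDecreasing c g) (d : ℤ) :
    SymmDecreasing (c + 2 * d) fun x ↦ g (-(d : ZMod n) + x) := by
  intro x y hxy hy
  have hshift (z : ℤ) : 2 * z - (c + 2 * d) = 2 * (-d + z) - c := by ring
  rw [hshift, hshift] at hxy
  rw [hshift] at hy
  simpa using hg _ _ hxy hy

lemma symmDecreasing_of_symm_of_add_one_le (hsymm : ∀ x : ℤ, g ((c - x : ℤ) : ZMod n) = g x)
    (hstep : ∀ x : ℤ, c ≤ 2 * x → 2 * (x + 1) ≤ c + n → g ((x + 1 : ℤ) : ZMod n) ≤ g x) :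
    SymmDecreasing c g := by
  have hdecr (x : ℤ) (hx : c ≤ 2 * x) (y : ℤ) (hxy : x ≤ y) :
      2 * y ≤ c + n → g (y : ZMod n) ≤ g x := by
    induction y, hxy using Int.leInduction with
    | base => exact fun _ ↦ le_rfl
    | succ y hxy ih => exact fun hy ↦ (hstep y (by lia) hy).trans (ih (by lia))
  have hfold (x : ℤ) : ∃ y : ℤ, g (y : ZMod n) = g x ∧ 2 * y - c = |2 * x - c| := by
    obtain h | h := le_total 0 (2 * x - c)
    · exact ⟨x, rfl, (abs_of_nonneg h).symm⟩
    · exact ⟨c - x, hsymm x, by rw [abs_of_nonpos h]; ring⟩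
  intro x y hxy hy
  obtain ⟨x', hgx, hx'⟩ := hfold x
  obtain ⟨y', hgy, hy'⟩ := hfold y
  rw [← hgx, ← hgy]
  have := abs_nonneg (2 * x - c)
  exact hdecr x' (by lia) y' (by lia) (by lia)

lemma convolve_initInterval (g : ZMod n → ℕ) {b : ℕ} (hb : b ≤ n) (x : ℤ) :
    convolve g (initInterval n b) x = ∑ j ∈ range b, g ((x - j : ℤ) : ZMod n) := by
  rw [convolve, initInterval, sum_image (natCast_injOn_range hb)]
  push_cast
  rfl

lemma convolve_initInterval_add_one (g : ZMod n → ℕ) {b : ℕ} (hb : b ≤ n) (x : ℤ) :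
    convolve g (initInterval n b) ((x + 1 : ℤ) : ZMod n) + g ((x + 1 - b : ℤ) : ZMod n) =
      convolve g (initInterval n b) x + g ((x + 1 : ℤ) : ZMod n) := by
  rw [convolve_initInterval g hb, convolve_initInterval g hb, ← sum_range_succ, sum_range_succ']
  simp

variable [NeZero n]

lemma exists_intCast_eq (c : ℤ) (x : ZMod n) :
    ∃ m : ℤ, (m : ZMod n) = x ∧ -n < 2 * m - c ∧ 2 * m - c ≤ n := by
  have hn : (0 : ℤ) < n := by exact_mod_cast NeZero.pos n
  obtain ⟨m, rfl⟩ := ZMod.intCast_surjective x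
  set q := (c + n - 2 * m) / (2 * n)
  have hlt : c + n - 2 * m < (q + 1) * (2 * n) := Int.lt_ediv_add_one_mul_self _ (by lia)
  have hle : q * (2 * n) ≤ c + n - 2 * m := Int.ediv_mul_le _ (by lia)
  exact ⟨m + n * q, by simp, by linarith, by linarith⟩

lemma SymmDecreasing.apply_sub (hg : SymmDecreasing c g) (x : ℤ) :
    g ((c - x : ℤ) : ZMod n) = g x := by
  obtain ⟨m, hm, hlt, hle⟩ := exists_intCast_eq c (x : ZMod n)
  have habs : |2 * (c - m) - c| = |2 * m - c| := by
    rw [show 2 * (c - m) - c = -(2 * m - c) by ring, abs_neg]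
  have hm_le : |2 * m - c| ≤ n := abs_le.mpr ⟨hlt.le, hle⟩
  rw [Int.cast_sub, ← hm, ← Int.cast_sub]
  exact (hg _ _ habs.ge (habs.trans_le hm_le)).antisymm (hg _ _ habs.le hm_le)

lemma SymmDecreasing.convolve_initInterval (hg : SymmDecreasing c g) {b : ℕ} (hb : b ≤ n) :
    SymmDecreasing (c + b - 1) (convolve g (initInterval n b)) := by
  refine symmDecreasing_of_symm_of_add_one_le (fun x ↦ ?_) fun x hx hxn ↦ ?_
  · rw [Pollard.convolve_initInterval g hb, Pollard.convolve_initInterval g hb,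
      ← sum_range_reflect]
    refine sum_congr rfl fun j hj ↦ ?_
    rw [mem_range] at hj
    rw [← hg.apply_sub]
    congr 2
    lia
  · have hends : g ((x + 1 : ℤ) : ZMod n) ≤ g ((x + 1 - b : ℤ) : ZMod n) := by
      obtain h | h := le_or_gt (2 * (x + 1) - c) n
      · exact hg _ _ (by grind) (by grind)
      · rw [show ((x + 1 : ℤ) : ZMod n) = ((x + 1 - n : ℤ) : ZMod n) by simp]
        exact hg _ _ (by grind) (by grind)
    have := convolve_initInterval_add_one g hb x
    lia

lemma symmDecreasing_single : SymmDecreasing 0 (Pi.single (0 : ZMod n) 1) := by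
  intro x y hxy hy
  by_cases h : (y : ZMod n) = 0
  · have hn : (0 : ℤ) < n := by exact_mod_cast NeZero.pos n
    have hy0 : y = 0 := Int.eq_zero_of_abs_lt_dvd
      ((ZMod.intCast_zmod_eq_zero_iff_dvd y n).mp h) (by grind)
    have hx0 : x = 0 := by grind
    rw [hx0, hy0]
  · simp [h]

lemma symmDecreasing_addConvolution_initInterval {a b : ℕ} (ha : a ≤ n) (hb : b ≤ n) :
    SymmDecreasing (a - 1 + b - 1) ((initInterval n a).addConvolution (initInterval n b)) := by
  rw [← convolve_convolve_single]
  simpa using (symmDecreasing_single.convolve_initInterval ha).convolve_initInterval hb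

lemma SymmDecreasing.monovary {h : ZMod n → ℕ} {c' : ℤ} (hh : SymmDecreasing c' h)
    (hg : SymmDecreasing c g) (hc : c' = c ∨ c' = c + 1) : Monovary h g := by
  intro x y hxy
  obtain ⟨x, rfl, hx⟩ := exists_intCast_eq c x
  obtain ⟨y, rfl, hy⟩ := exists_intCast_eq c y
  have hcloser : |2 * y - c| < |2 * x - c| := by
    contrapose! hxy
    exact hg x y hxy (abs_le.mpr ⟨hy.1.le, hy.2⟩)
  refine hh y x ?_ (abs_le.mpr ⟨by lia, by lia⟩)
  obtain rfl | rfl := hc <;> grind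

lemma SymmDecreasing.exists_monovary_translate {h : ZMod n → ℕ} {c' : ℤ}
    (hh : SymmDecreasing c' h) (hg : SymmDecreasing c g) :
    ∃ d : ZMod n, Monovary (fun x ↦ h (-d + x)) g :=
  ⟨((c - c' + 1) / 2 : ℤ), (hh.translate _).monovary hg (by lia)⟩

lemma Majorized.convolve_initInterval {p : ℕ} [Fact p.Prime] {f g : ZMod p → ℕ} {c : ℤ}
    (hfg : Majorized f g) (hg : SymmDecreasing c g) (B : Finset (ZMod p)) :
    Majorized (convolve f B) (convolve g (initInterval p #B)) := by
  have hle (A : Finset (ZMod p)) : #A ≤ p := (card_le_univ A).trans_eq (ZMod.card p)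
  refine majorized_of_forall_sum_le ?_ fun M ↦ ?_
  · rw [sum_convolve, sum_convolve, hfg.1, card_initInterval (hle B)]
  obtain ⟨d, hd⟩ :=
    (symmDecreasing_addConvolution_initInterval (hle M) (hle B)).exists_monovary_translate hg
  have hmaj : Majorized (M.addConvolution (-B)) fun x ↦
      (initInterval p #M).addConvolution (initInterval p #B) (-d + x) := by
    have h := majorized_addConvolution_initInterval M (-B)
    rw [card_neg] at h
    exact h.comp_equiv (Equiv.addLeft (-d))
  refine ⟨(d + (#B - 1)) +ᵥ initInterval p #M, ?_, ?_⟩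
  · rw [card_vadd_finset, card_initInterval (hle M)]
  · rw [sum_finset_convolve, sum_finset_convolve, vadd_addConvolution_neg_initInterval]
    exact hfg.sum_mul_le_sum_mul hmaj hd

end SymmDecreasing

section SigmaCount

variable {n k : ℕ}

lemma sigmaCount_zero (A : Fin 0 → Finset (ZMod n)) :
    (fun x ↦ sigmaCount x A) = Pi.single 0 1 := by
  funext x
  by_cases h : x = 0 <;> simp [sigmaCount, h]

lemma sigmaCount_succ (A : Fin (k + 1) → Finset (ZMod n)) :
    (fun x ↦ sigmaCount x A) = convolve (fun x ↦ sigmaCount x fun j ↦ A j.succ) (A 0) := by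
  funext x
  simp only [convolve, sigmaCount]
  rw [← card_sigma]
  refine card_bij' (fun y _ ↦ ⟨y 0, Fin.tail y⟩) (fun z _ ↦ Fin.cons z.1 z.2) ?_ ?_ ?_ ?_
  · intro y hy
    simp only [mem_filter, Fintype.mem_piFinset, mem_sigma, Fin.sum_univ_succ] at hy ⊢
    exact ⟨hy.1 0, fun j ↦ hy.1 j.succ, sub_eq_of_eq_add' hy.2⟩
  · intro z hz
    simp only [mem_filter, Fintype.mem_piFinset, mem_sigma, Fin.sum_univ_succ, Fin.cons_zero,
      Fin.cons_succ, Fin.forall_fin_succ] at hz ⊢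
    exact ⟨⟨hz.1, hz.2.1⟩, eq_add_of_sub_eq' hz.2.2⟩
  · exact fun y _ ↦ Fin.cons_self_tail y
  · exact fun z _ ↦ by simp

variable [NeZero n]

lemma exists_symmDecreasing_sigmaCount_initInterval {a : Fin k → ℕ} (ha : ∀ j, a j ≤ n) :
    ∃ c, SymmDecreasing c fun x ↦ sigmaCount x fun j ↦ initInterval n (a j) := by
  induction k with
  | zero => exact ⟨0, sigmaCount_zero _ ▸ symmDecreasing_single⟩
  | succ k ih =>
    obtain ⟨c, hc⟩ := ih fun j ↦ ha j.succ
    rw [sigmaCount_succ]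
    exact ⟨_, hc.convolve_initInterval (ha 0)⟩

lemma sum_ncount (A : Fin k → Finset (ZMod n)) (r : ℕ) :
    ∑ i ∈ Icc 1 r, ncount i A = ∑ x, min r (sigmaCount x A) :=
  sum_card_superlevel (fun x ↦ sigmaCount x A) 0 r

lemma majorized_sigmaCount_initInterval {p : ℕ} [Fact p.Prime] (A : Fin k → Finset (ZMod p)) :
    Majorized (fun x ↦ sigmaCount x A) fun x ↦ sigmaCount x fun j ↦ initInterval p #(A j) := by
  induction k with
  | zero =>
    rw [sigmaCount_zero, sigmaCount_zero]
    exact ⟨rfl, fun _ ↦ le_rfl⟩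
  | succ k ih =>
    obtain ⟨c, hc⟩ := exists_symmDecreasing_sigmaCount_initInterval
      (a := fun j : Fin k ↦ #(A j.succ)) fun j ↦ (card_le_univ _).trans_eq (ZMod.card p)
    rw [sigmaCount_succ A, sigmaCount_succ fun j ↦ initInterval p #(A j)]
    exact (ih fun j ↦ A j.succ).convolve_initInterval hc (A 0)

end SigmaCount

end Pollard

theorem stmt_4 (p : ℕ) (hp : p.Prime) [NeZero p] (k : ℕ)
    (A : Fin k → Finset (ZMod p)) (a : Fin k → ℕ) (ha : ∀ j, (A j).card = a j)
    (r : ℕ) (hr : 1 ≤ r) :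
    ∑ i ∈ Finset.Icc 1 r, ncount i (fun j => initInterval p (a j)) ≤
      ∑ i ∈ Finset.Icc 1 r, ncount i A := by
  obtain rfl : (fun j ↦ (A j).card) = a := funext ha
  have : Fact p.Prime := ⟨hp⟩
  rw [Pollard.sum_ncount, Pollard.sum_ncount]
  exact (Pollard.majorized_sigmaCount_initInterval A).2 r
end

section
/- For every prime p, integers k ≥ 1 and a_0,...,a_k ∈ [0,p], there exists t ∈ Z_p such that the minimum of s(A_0,...,A_k) over all subsets A_i ⊆ Z_p with |A_i| = a_i is attained by the intervals A_0 = [a_0]+t, A_1 = [a_1], ..., A_k = [a_k]. -/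
/-- Number of `(k+1)`-tuples `(x 0, ..., x k)` with `x i ∈ A i` and `x 0 = x 1 + ... + x k`. -/
def scount {p : ℕ} {k : ℕ} (A : Fin (k + 1) → Finset (ZMod p)) : ℕ :=
  ((Fintype.piFinset A).filter (fun x => x 0 = ∑ i : Fin k, x i.succ)).card

/-- The interval `[a] + t = {t, t+1, ..., t+a-1}` in `ZMod p`. -/
def interval {p : ℕ} (t : ZMod p) (a : ℕ) : Finset (ZMod p) :=
  (Finset.range a).image (fun j : ℕ => t + (j : ZMod p))

/-!
Passing to the complement of `A 0`, one has to maximise the number of tuples whose sum lies in a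
set of prescribed size. The multiset `[a 1] + ⋯ + [a k]` is a union of intervals that all belong to
one chain of nested intervals with a common centre, so a member of the chain is simultaneously
optimal for all of them. For arbitrary sets, the dual form of Pollard's theorem bounds the number
of pairs `(x, y)` with `x + y ∈ C` by the value it takes for intervals; cutting the weight function
into level sets turns this into a bound for arbitrary weights, which can be iterated over the
summands.
-/

open Finset
open scoped Pointwise

section PairSum

/-- The sum of `h` over the multiset `A + B`. For `h` the indicator function of `C`, it counts the
pairs in `A × B` whose sum lies in `C`. -/
def pairSum {G M : Type*} [Add G] [AddCommMonoid M] (A B : Finset G) (h : G → M) : M :=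
  ∑ x ∈ A, ∑ y ∈ B, h (x + y)

variable {G M : Type*} [AddCommMonoid M]

theorem pairSum_comm [AddCommMagma G] (A B : Finset G) (h : G → M) :
    pairSum A B h = pairSum B A h := by
  unfold pairSum
  rw [sum_comm]
  simp only [add_comm]

theorem pairSum_sum [Add G] {ι : Type*} (s : Finset ι) (A B : Finset G) (f : ι → G → M) :
    pairSum A B (fun x => ∑ i ∈ s, f i x) = ∑ i ∈ s, pairSum A B (f i) := by
  unfold pairSum
  simp only [sum_comm (t := s)]

theorem pairSum_eq_union_inter_add_sdiff [AddCommMagma G] [DecidableEq G] (A B : Finset G)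
    (h : G → M) :
    pairSum A B h = pairSum (A ∪ B) (A ∩ B) h + pairSum (A \ B) (B \ A) h := by
  have sum_left (f : G → M) : ∑ x ∈ A, f x = ∑ x ∈ A ∩ B, f x + ∑ x ∈ A \ B, f x :=
    (sum_inter_add_sum_sdiff A B f).symm
  have sum_right (f : G → M) : ∑ x ∈ B, f x = ∑ x ∈ A ∩ B, f x + ∑ x ∈ B \ A, f x := by
    rw [inter_comm, sum_inter_add_sum_sdiff]
  have sum_union (f : G → M) :
      ∑ x ∈ A ∪ B, f x = ∑ x ∈ A ∩ B, f x + ∑ x ∈ A \ B, f x + ∑ x ∈ B \ A, f x := by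
    rw [← sum_left, ← union_sdiff_self_eq_union, sum_union disjoint_sdiff]
  have swap := pairSum_comm (A ∩ B) (B \ A) h
  unfold pairSum at swap ⊢
  simp only [sum_union, sum_left, sum_right, sum_add_distrib, swap]
  abel

theorem pairSum_indicator_le_card_mul_card [Add G] [DecidableEq G] (A B C : Finset G) :
    pairSum A B (fun x => if x ∈ C then 1 else 0) ≤ #A * #B := by
  unfold pairSum
  refine (sum_le_card_nsmul A _ #B fun x _ => ?_).trans_eq (smul_eq_mul ..)
  rw [sum_boole, Nat.cast_id]
  exact card_filter_le _ _

theorem pairSum_indicator_le_card_right_mul [Add G] [IsRightCancelAdd G] [DecidableEq G]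
    (A B C : Finset G) : pairSum A B (fun x => if x ∈ C then 1 else 0) ≤ #B * #C := by
  unfold pairSum
  rw [sum_comm]
  refine (sum_le_card_nsmul B _ #C fun y _ => ?_).trans_eq (smul_eq_mul ..)
  rw [sum_boole, Nat.cast_id]
  exact card_le_card_of_injOn (· + y) (fun x hx => (mem_filter.mp hx).2)
    (add_left_injective y).injOn

variable [AddCommGroup G]

theorem pairSum_vadd_right [DecidableEq G] (g : G) (A B : Finset G) (h : G → M) :
    pairSum A (g +ᵥ B) h = pairSum A B (fun x => h (g +ᵥ x)) := by
  simp only [pairSum, vadd_finset_def, vadd_eq_add, sum_image (add_right_injective g).injOn,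
    add_left_comm]

theorem pairSum_univ_left [Fintype G] (B : Finset G) (h : G → M) :
    pairSum univ B h = #B • ∑ x, h x := by
  rw [pairSum_comm, pairSum, ← sum_const]
  exact sum_congr rfl fun y _ => Equiv.sum_comp (Equiv.addLeft y) h

theorem pairSum_add_pairSum_compl_left [Fintype G] [DecidableEq G] (A B : Finset G) (h : G → M) :
    pairSum A B h + pairSum Aᶜ B h = #B • ∑ x, h x := by
  rw [← pairSum_univ_left]
  exact sum_add_sum_compl A _

theorem pairSum_eq_add_pairSum_compl_compl [Fintype G] [DecidableEq G] (A B : Finset G)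
    (hAB : Fintype.card G ≤ #A + #B) (h : G → ℕ) :
    pairSum A B h = (#A + #B - Fintype.card G) * ∑ x, h x + pairSum Aᶜ Bᶜ h := by
  have compl_A := pairSum_add_pairSum_compl_left A B h
  have compl_B := pairSum_add_pairSum_compl_left B Aᶜ h
  rw [pairSum_comm B, pairSum_comm Bᶜ] at compl_B
  have split : #B = (#A + #B - Fintype.card G) + #Aᶜ := by
    have := card_add_card_compl A
    omega
  rw [smul_eq_mul] at compl_A compl_B
  rw [split, add_mul] at compl_A
  omega

end PairSum

section Pollard

variable {G : Type*}

theorem pairSum_indicator_le_of_union_inter [AddCommMagma G] [DecidableEq G] {A B C : Finset G}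
    {T : ℕ} (hT : T ≤ #(A ∩ B))
    (h : pairSum (A ∪ B) (A ∩ B) (fun x => if x ∈ C then 1 else 0) ≤
      T * #C + (#(A ∪ B) - T) * (#(A ∩ B) - T)) :
    pairSum A B (fun x => if x ∈ C then 1 else 0) ≤ T * #C + (#A - T) * (#B - T) := by
  have hsdiff := pairSum_indicator_le_card_mul_card (A \ B) (B \ A) C
  obtain ⟨j, hj⟩ := Nat.exists_eq_add_of_le hT
  have hA := card_sdiff_add_card_inter A B
  have hB := card_sdiff_add_card_inter B A
  have hU := card_union_add_card_inter A B
  rw [inter_comm] at hB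
  rw [show #(A ∪ B) - T = #(A \ B) + #(B \ A) + j by omega,
    show #(A ∩ B) - T = j by omega] at h
  rw [pairSum_eq_union_inter_add_sdiff, show #A - T = #(A \ B) + j by omega,
    show #B - T = #(B \ A) + j by omega]
  linarith

theorem pairSum_indicator_le_of_sdiff [AddCommMagma G] [IsRightCancelAdd G] [DecidableEq G]
    {A B C : Finset G} {T : ℕ} (hT : #(A ∩ B) ≤ T)
    (h : pairSum (A \ B) (B \ A) (fun x => if x ∈ C then 1 else 0) ≤
      (T - #(A ∩ B)) * #C + (#(A \ B) - (T - #(A ∩ B))) * (#(B \ A) - (T - #(A ∩ B)))) :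
    pairSum A B (fun x => if x ∈ C then 1 else 0) ≤ T * #C + (#A - T) * (#B - T) := by
  have hunion := pairSum_indicator_le_card_right_mul (A ∪ B) (A ∩ B) C
  have hA := card_sdiff_add_card_inter A B
  have hB := card_sdiff_add_card_inter B A
  rw [inter_comm] at hB
  rw [show #(A \ B) - (T - #(A ∩ B)) = #A - T by omega,
    show #(B \ A) - (T - #(A ∩ B)) = #B - T by omega] at h
  have hTC : T * #C = #(A ∩ B) * #C + (T - #(A ∩ B)) * #C := by
    rw [← add_mul, Nat.add_sub_cancel' hT]
  rw [pairSum_eq_union_inter_add_sdiff]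
  omega

variable [AddCommGroup G]

theorem exists_mem_vadd_notMem_of_card_lt_minOrder {A : Finset G} (hA : A.Nonempty)
    (hcard : (#A : ℕ∞) < AddMonoid.minOrder G) {d : G} (hd : d ≠ 0) : ∃ a ∈ A, d +ᵥ a ∉ A := by
  classical
  by_contra! hclosed
  obtain ⟨a, ha⟩ := hA
  let S := AddAction.stabilizer G (A : Set G)
  have hdA : d +ᵥ A = A :=
    eq_of_subset_of_card_le (image_subset_iff.mpr hclosed) (card_vadd_finset d A).ge
  have hdS : d ∈ S := by
    rw [AddAction.mem_stabilizer_iff, ← coe_vadd_finset, hdA]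
  have hS : S ≠ ⊥ := fun hbot => hd (by simpa [hbot] using hdS)
  have hsub : a +ᵥ (S : Set G) ⊆ A := AddAction.vadd_set_stabilizer_subset ha
  have hfin : (S : Set G).Finite := Set.Finite.of_vadd_set (A.finite_toSet.subset hsub)
  have hle : Nat.card S ≤ #A := by
    have := Set.ncard_le_ncard hsub A.finite_toSet
    rwa [Set.ncard_vadd_set, Set.ncard_coe_finset] at this
  exact hcard.not_ge ((AddMonoid.minOrder_le_natCard hS hfin).trans (by exact_mod_cast hle))

variable [DecidableEq G]

theorem exists_vadd_inter_nonempty_and_not_subset {A B : Finset G} (hA : A.Nonempty)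
    (hcard : (#A : ℕ∞) < AddMonoid.minOrder G) (hB : 1 < #B) :
    ∃ g : G, (A ∩ (g +ᵥ B)).Nonempty ∧ ¬ g +ᵥ B ⊆ A := by
  obtain ⟨b, hb, b', hb', hne⟩ := one_lt_card.mp hB
  obtain ⟨a, ha, hda⟩ :=
    exists_mem_vadd_notMem_of_card_lt_minOrder hA hcard (sub_ne_zero.mpr hne.symm)
  refine ⟨a - b, ⟨a, mem_inter.mpr ⟨ha, ?_⟩⟩, fun hsub => hda (hsub ?_)⟩
  · exact mem_vadd_finset.mpr ⟨b, hb, by simp⟩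
  · exact mem_vadd_finset.mpr ⟨b', hb', by simp only [vadd_eq_add]; abel⟩

-- With `r x` the number of representations of `x` in `A + B`, the choice `C = {x | T < r x}` gives
-- Pollard's inequality `T * (#A + #B - T) ≤ ∑ x, min (r x) T`.
theorem pairSum_indicator_le_of_card_add_card_le_minOrder (A B C : Finset G)
    (hAB : ((#A + #B : ℕ) : ℕ∞) ≤ AddMonoid.minOrder G) {T : ℕ} (hTA : T ≤ #A) (hTB : T ≤ #B) :
    pairSum A B (fun x => if x ∈ C then 1 else 0) ≤ T * #C + (#A - T) * (#B - T) := by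
  induction hn : #B using Nat.strong_induction_on generalizing A B C T with
  | _ n ih =>
  subst hn
  rcases T.eq_zero_or_pos with rfl | hT
  · simpa using pairSum_indicator_le_card_mul_card A B C
  rcases hTB.eq_or_lt with rfl | hTB
  · simpa using pairSum_indicator_le_card_right_mul A B C
  have hA : (#A : ℕ∞) < AddMonoid.minOrder G :=
    lt_of_lt_of_le (by exact_mod_cast show #A < #A + #B by omega) hAB
  obtain ⟨g, hinter, hsub⟩ :=
    exists_vadd_inter_nonempty_and_not_subset (card_pos.mp (by omega)) hA (by omega : 1 < #B)
  have translate : pairSum A B (fun x => if x ∈ C then 1 else 0) =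
      pairSum A (g +ᵥ B) (fun x => if x ∈ g +ᵥ C then 1 else 0) := by
    simp only [pairSum_vadd_right, vadd_mem_vadd_finset_iff]
  rw [translate, ← card_vadd_finset g C]
  rw [← card_vadd_finset g B] at hAB hTB ih ⊢
  generalize g +ᵥ B = B at *
  generalize g +ᵥ C = C
  have hU := card_union_add_card_inter A B
  have hA' := card_sdiff_add_card_inter A B
  have hB' := card_sdiff_add_card_inter B A
  rw [inter_comm] at hB'
  have hinter := hinter.card_pos
  have hsdiff : 0 < #(B \ A) := card_pos.mpr (sdiff_nonempty.mpr hsub)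
  rcases le_total T #(A ∩ B) with hle | hle
  · exact pairSum_indicator_le_of_union_inter hle
      (ih _ (by omega) _ _ C (by rwa [hU]) (by omega) hle rfl)
  · have hAB' : ((#(A \ B) + #(B \ A) : ℕ) : ℕ∞) ≤ AddMonoid.minOrder G :=
      le_trans (by exact_mod_cast (by omega : #(A \ B) + #(B \ A) ≤ #A + #B)) hAB
    exact pairSum_indicator_le_of_sdiff hle
      (ih _ (by omega) _ _ C hAB' (by omega) (by omega) rfl)

end Pollard

section HookSizes

/-- The sizes `n + b - 1, n + b - 3, …` of the hooks into which an `n × b` rectangle decomposes.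
They are also the sizes of the superlevel sets of the number of representations of an integer as a
sum of two elements of given intervals of lengths `n` and `b`. -/
def hookSizes : ℕ → ℕ → Multiset ℕ
  | n + 1, b + 1 => (n + b + 1) ::ₘ hookSizes n b
  | 0, _ => 0
  | _ + 1, 0 => 0

theorem lt_add_of_mem_hookSizes {n b m : ℕ} (hm : m ∈ hookSizes n b) : m < n + b := by
  induction n, b using hookSizes.induct with
  | case1 n b ih =>
    rw [hookSizes, Multiset.mem_cons] at hm
    rcases hm with rfl | hm
    · omega
    · have := ih hm
      omega
  | case2 => simp [hookSizes] at hm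
  | case3 => simp [hookSizes] at hm

theorem sum_hookSizes (n b : ℕ) : (hookSizes n b).sum = n * b := by
  induction n, b using hookSizes.induct with
  | case1 n b ih =>
    rw [hookSizes, Multiset.sum_cons, ih, Nat.succ_eq_add_one, Nat.succ_eq_add_one]
    ring
  | case2 => simp [hookSizes]
  | case3 => simp [hookSizes]

-- `T` is the number of hooks of size greater than `c`.
theorem exists_sum_min_hookSizes_eq (c n b : ℕ) :
    ∃ T ≤ n, T ≤ b ∧ ((hookSizes n b).map (min c)).sum = T * c + (n - T) * (b - T) := by
  induction n, b using hookSizes.induct with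
  | case1 n b ih =>
    rcases le_or_gt (n + b + 1) c with hc | hc
    · have hmap : (hookSizes (n + 1) (b + 1)).map (min c) = hookSizes (n + 1) (b + 1) :=
        (Multiset.map_congr rfl fun m hm =>
          min_eq_right (by have := lt_add_of_mem_hookSizes hm; omega)).trans (Multiset.map_id' _)
      exact ⟨0, by omega, by omega, by simp [hmap, sum_hookSizes]⟩
    · obtain ⟨T, hTn, hTb, hsum⟩ := ih
      refine ⟨T + 1, by omega, by omega, ?_⟩
      rw [hookSizes, Multiset.map_cons, Multiset.sum_cons, hsum, min_eq_left hc.le,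
        Nat.succ_eq_add_one, Nat.succ_eq_add_one, Nat.add_sub_add_right, Nat.add_sub_add_right]
      ring
  | case2 b => exact ⟨0, by simp [hookSizes]⟩
  | case3 n => exact ⟨0, by simp [hookSizes]⟩

/-- The sizes of the superlevel sets of the number of representations of an element of `ZMod p` as
a sum of two elements of given intervals of lengths `n` and `b`. When `n + b > p`, every element
has at least `n + b - p` representations, and the remaining ones are counted by the complements. -/
def layerSizes (p n b : ℕ) : Multiset ℕ :=
  if n + b ≤ p then hookSizes n b
  else Multiset.replicate (n + b - p) p + hookSizes (p - n) (p - b)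

theorem le_of_mem_layerSizes {p n b m : ℕ} (hn : n ≤ p) (hb : b ≤ p) (hm : m ∈ layerSizes p n b) :
    m ≤ p := by
  unfold layerSizes at hm
  split_ifs at hm with hnb
  · exact (lt_add_of_mem_hookSizes hm).le.trans hnb
  · rcases Multiset.mem_add.mp hm with hm | hm
    · exact (Multiset.eq_of_mem_replicate hm).le
    · have := lt_add_of_mem_hookSizes hm
      omega

end HookSizes

section Interval

variable {p : ℕ}

theorem injOn_add_natCast (s : ZMod p) {n : ℕ} (hn : n ≤ p) :
    Set.InjOn (fun j : ℕ => s + (j : ZMod p)) (range n) := by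
  intro i hi j hj hij
  rw [mem_coe, mem_range] at hi hj
  have := (ZMod.natCast_eq_natCast_iff' i j p).mp (add_left_cancel hij)
  rwa [Nat.mod_eq_of_lt (by omega), Nat.mod_eq_of_lt (by omega)] at this

theorem card_interval (s : ZMod p) {n : ℕ} (hn : n ≤ p) : #(interval s n) = n := by
  rw [interval, card_image_of_injOn (injOn_add_natCast s hn), card_range]

theorem sum_interval {M : Type*} [AddCommMonoid M] (s : ZMod p) {n : ℕ} (hn : n ≤ p)
    (h : ZMod p → M) : ∑ x ∈ interval s n, h x = ∑ i ∈ range n, h (s + i) :=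
  sum_image (injOn_add_natCast s hn)

theorem compl_interval [NeZero p] (s : ZMod p) {n : ℕ} (hn : n ≤ p) :
    (interval s n)ᶜ = interval (s + (n : ZMod p)) (p - n) := by
  refine eq_of_subset_of_card_le (fun x hx => ?_) ?_
  · have hx' : s + ((x - s).val : ZMod p) = x := by rw [ZMod.natCast_zmod_val, add_sub_cancel]
    have hlt : (x - s).val < p := ZMod.val_lt _
    have hle : n ≤ (x - s).val := by
      by_contra! hlt
      exact mem_compl.mp hx (mem_image.mpr ⟨_, mem_range.mpr hlt, hx'⟩)
    refine mem_image.mpr ⟨(x - s).val - n, mem_range.mpr (by omega), ?_⟩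
    rw [Nat.cast_sub hle, add_assoc, add_sub_cancel, hx']
  · rw [card_compl, ZMod.card, card_interval _ hn, card_interval _ (by omega)]

/-- The interval of length `n` centred at `(d - 1) / 2`, rounded to the left when `d - n` is odd.
For fixed `d`, these intervals form a chain. -/
def centeredInterval (p : ℕ) (d : ℤ) (n : ℕ) : Finset (ZMod p) :=
  interval (((d - n) / 2 : ℤ) : ZMod p) n

theorem card_centeredInterval (d : ℤ) {n : ℕ} (hn : n ≤ p) : #(centeredInterval p d n) = n :=
  card_interval _ hn

theorem mem_interval_intCast {s : ℤ} {n : ℕ} {x : ZMod p} :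
    x ∈ interval (s : ZMod p) n ↔ ∃ i : ℤ, s ≤ i ∧ i < s + n ∧ (i : ZMod p) = x := by
  simp only [interval, mem_image, mem_range]
  constructor
  · rintro ⟨j, hj, rfl⟩
    exact ⟨s + j, by omega, by omega, by push_cast; rfl⟩
  · rintro ⟨i, hsi, hin, rfl⟩
    obtain ⟨j, rfl⟩ := Int.le.dest hsi
    exact ⟨j, by omega, by push_cast; rfl⟩

theorem centeredInterval_mono (d : ℤ) : Monotone (centeredInterval p d) := by
  intro m n hmn x hx
  obtain ⟨i, hi, hi', rfl⟩ := mem_interval_intCast.mp hx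
  exact mem_interval_intCast.mpr ⟨i, by omega, by omega, rfl⟩

theorem centeredInterval_self [NeZero p] (d : ℤ) : centeredInterval p d p = univ := by
  rw [← card_eq_iff_eq_univ, card_centeredInterval d le_rfl, ZMod.card]

theorem centeredInterval_add_two_mul (d : ℤ) (n : ℕ) :
    centeredInterval p (d + 2 * p) n = centeredInterval p d n := by
  rw [centeredInterval, centeredInterval, show (d + 2 * p - n) / 2 = (d - n) / 2 + p by omega]
  simp

theorem compl_centeredInterval [NeZero p] (d : ℤ) {n : ℕ} (hn : n ≤ p) :
    (centeredInterval p d n)ᶜ = centeredInterval p (d + p) (p - n) := by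
  rw [centeredInterval, centeredInterval, compl_interval _ hn,
    show (d + p - ((p - n : ℕ) : ℤ)) / 2 = (d - n) / 2 + n by omega]
  push_cast
  rfl

theorem sum_indicator_centeredInterval (d : ℤ) {m n : ℕ} (hm : m ≤ p) (hn : n ≤ p) :
    (∑ x ∈ centeredInterval p d m, if x ∈ centeredInterval p d n then 1 else 0) = min m n := by
  rw [sum_boole, Nat.cast_id, filter_mem_eq_inter]
  rcases le_total m n with hmn | hnm
  · rw [inter_eq_left.mpr (centeredInterval_mono d hmn), card_centeredInterval d hm,
      min_eq_left hmn]
  · rw [inter_eq_right.mpr (centeredInterval_mono d hnm), card_centeredInterval d hn,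
      min_eq_right hnm]

end Interval

section IntervalSum

variable {p : ℕ}

theorem sum_range_sum_range_succ {M : Type*} [AddCommMonoid M] (n b : ℕ) (φ : ℕ → M) :
    ∑ i ∈ range (n + 1), ∑ j ∈ range (b + 1), φ (i + j) =
      ∑ i ∈ range (n + b + 1), φ i + ∑ i ∈ range n, ∑ j ∈ range b, φ (i + j + 1) := by
  rw [sum_range_succ', show n + b + 1 = b + 1 + n by ring,
    sum_range_add φ (b + 1) n]
  simp only [sum_range_succ _ b, sum_add_distrib, zero_add]
  simp only [add_comm, add_left_comm, add_assoc]

theorem pairSum_interval_succ (s t : ZMod p) {n b : ℕ} (hnb : n + b + 1 ≤ p)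
    {M : Type*} [AddCommMonoid M] (h : ZMod p → M) :
    pairSum (interval s (n + 1)) (interval t (b + 1)) h =
      ∑ x ∈ interval (s + t) (n + b + 1), h x + pairSum (interval s n) (interval (t + 1) b) h := by
  have hadd (i j : ℕ) : s + i + (t + j) = s + t + (i + j : ℕ) := by
    push_cast
    ring
  have hadd_one (i j : ℕ) : s + i + (t + 1 + j) = s + t + (i + j + 1 : ℕ) := by
    push_cast
    ring
  simp only [pairSum, sum_interval _ (show n + 1 ≤ p by omega),
    sum_interval _ (show b + 1 ≤ p by omega), sum_interval _ (show n ≤ p by omega),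
    sum_interval _ (show b ≤ p by omega), sum_interval _ hnb, hadd, hadd_one]
  exact sum_range_sum_range_succ n b fun i => h (s + t + i)

theorem pairSum_centeredInterval_of_add_le (d s : ℤ) {n b : ℕ} (hnb : n + b ≤ p)
    {M : Type*} [AddCommMonoid M] (h : ZMod p → M) :
    pairSum (centeredInterval p d n) (interval (s : ZMod p) b) h =
      ((hookSizes n b).map fun m =>
        ∑ x ∈ centeredInterval p (d + b - 1 + 2 * s) m, h x).sum := by
  induction n, b using hookSizes.induct generalizing d s with
  | case1 n b ih =>
    have hleft : (d - (n + 1 : ℕ)) / 2 = (d - 1 - n) / 2 := by omega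
    have hcenter : d - 1 + b - 1 + 2 * (s + 1) = d + (b + 1 : ℕ) - 1 + 2 * s := by omega
    have hhook : ((d - 1 - n) / 2 + s : ℤ) =
        (d + (b + 1 : ℕ) - 1 + 2 * s - (n + b + 1 : ℕ)) / 2 := by omega
    have ih := ih (d - 1) (s + 1) (by omega)
    rw [hcenter] at ih
    rw [hookSizes, Multiset.map_cons, Multiset.sum_cons, ← ih]
    unfold centeredInterval
    rw [Nat.succ_eq_add_one, Nat.succ_eq_add_one, hleft, pairSum_interval_succ _ _ (by omega),
      ← hhook, Int.cast_add, Int.cast_add, Int.cast_one]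
  | case2 b => simp [hookSizes, pairSum, centeredInterval, interval]
  | case3 n => simp [hookSizes, pairSum, interval]

theorem pairSum_centeredInterval [NeZero p] (d : ℤ) {n b : ℕ} (hn : n ≤ p) (hb : b ≤ p)
    (h : ZMod p → ℕ) :
    pairSum (centeredInterval p d n) (interval 0 b) h =
      ((layerSizes p n b).map fun m => ∑ x ∈ centeredInterval p (d + b - 1) m, h x).sum := by
  unfold layerSizes
  split_ifs with hnb
  · simpa using pairSum_centeredInterval_of_add_le (p := p) d 0 hnb h
  · have hcompl := pairSum_centeredInterval_of_add_le (p := p) (d + p) b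
      (show p - n + (p - b) ≤ p by omega) h
    have hcenter : d + p + (p - b : ℕ) - 1 + 2 * b = d + b - 1 + 2 * p := by omega
    simp only [hcenter, centeredInterval_add_two_mul, Int.cast_natCast] at hcompl
    rw [pairSum_eq_add_pairSum_compl_compl _ _
        (by rw [card_centeredInterval d hn, card_interval 0 hb, ZMod.card]; omega),
      card_centeredInterval d hn, card_interval 0 hb, ZMod.card, compl_centeredInterval d hn,
      compl_interval 0 hb, zero_add, hcompl, Multiset.map_add, Multiset.sum_add,
      Multiset.map_replicate, Multiset.sum_replicate, centeredInterval_self, smul_eq_mul]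

end IntervalSum

section TopSum

variable {α : Type*} [Fintype α]

/-- The largest sum of `h` over a set of `n` elements. -/
def topSum (n : ℕ) (h : α → ℕ) : ℕ :=
  (powersetCard n univ).sup fun N => ∑ x ∈ N, h x

theorem sum_le_topSum (N : Finset α) (h : α → ℕ) : ∑ x ∈ N, h x ≤ topSum #N h :=
  le_sup (f := fun N => ∑ x ∈ N, h x) (mem_powersetCard.mpr ⟨subset_univ _, rfl⟩)

theorem exists_card_eq_and_topSum_eq {n : ℕ} (hn : n ≤ Fintype.card α) (h : α → ℕ) :
    ∃ N : Finset α, #N = n ∧ topSum n h = ∑ x ∈ N, h x := by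
  obtain ⟨N, hN, hsum⟩ :=
    exists_mem_eq_sup _ (powersetCard_nonempty.mpr hn) fun N : Finset α => ∑ x ∈ N, h x
  exact ⟨N, (mem_powersetCard.mp hN).2, hsum⟩

theorem topSum_card (h : α → ℕ) : topSum (Fintype.card α) h = ∑ x, h x := by
  rw [topSum, ← card_univ, powersetCard_self, sup_singleton]

theorem topSum_indicator_le [DecidableEq α] (n : ℕ) (C : Finset α) :
    topSum n (fun x => if x ∈ C then 1 else 0) ≤ min n #C := by
  refine Finset.sup_le fun N hN => ?_
  rw [sum_boole, Nat.cast_id, filter_mem_eq_inter, ← (mem_powersetCard.mp hN).2]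
  exact le_min (card_le_card inter_subset_left) (card_le_card inter_subset_right)

theorem exists_card_eq_and_forall_notMem_le {n : ℕ} (hn : n ≤ Fintype.card α) (h : α → ℕ) :
    ∃ N : Finset α, #N = n ∧ ∀ x ∈ N, ∀ y ∉ N, h y ≤ h x := by
  classical
  induction n with
  | zero => exact ⟨∅, by simp⟩
  | succ n ih =>
    obtain ⟨N, hN, hdom⟩ := ih (by omega)
    have hne : Nᶜ.Nonempty := by
      rw [← card_pos, card_compl]
      omega
    obtain ⟨x, hx, hmax⟩ := exists_max_image Nᶜ h hne
    refine ⟨insert x N, by rw [card_insert_of_notMem (mem_compl.mp hx), hN], fun z hz y hy => ?_⟩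
    rw [mem_insert, not_or] at hy
    rcases mem_insert.mp hz with rfl | hz
    · exact hmax y (mem_compl.mpr hy.2)
    · exact hdom z hz y hy.2

theorem eq_sum_range_indicator_lt {m K : ℕ} (hm : m ≤ K) :
    m = ∑ j ∈ range K, if j < m then 1 else 0 := by
  have hfilter : {j ∈ range K | j < m} = range m := by
    ext j
    simp only [mem_filter, mem_range]
    omega
  rw [sum_boole, Nat.cast_id, hfilter, card_range]

theorem sum_min_card_superlevel_le_topSum {n : ℕ} (hn : n ≤ Fintype.card α) {h : α → ℕ} {K : ℕ}
    (hK : ∀ x, h x ≤ K) : ∑ j ∈ range K, min #{x | j < h x} n ≤ topSum n h := by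
  obtain ⟨N, rfl, hdom⟩ := exists_card_eq_and_forall_notMem_le hn h
  calc ∑ j ∈ range K, min #{x | j < h x} #N
      ≤ ∑ j ∈ range K, #{x ∈ N | j < h x} := sum_le_sum fun j _ => ?_
    _ = ∑ x ∈ N, h x := by
      simp only [card_filter]
      rw [sum_comm]
      exact sum_congr rfl fun x _ => (eq_sum_range_indicator_lt (hK x)).symm
    _ ≤ topSum #N h := sum_le_topSum N h
  by_cases hN : ∀ x ∈ N, j < h x
  · rw [filter_true_of_mem hN]
    exact min_le_right _ _
  · push Not at hN
    obtain ⟨x, hxN, hxj⟩ := hN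
    refine (min_le_left _ _).trans (card_le_card fun y hy => ?_)
    have hyj := (mem_filter.mp hy).2
    have hyN : y ∈ N := by
      by_contra hyN
      have := hdom x hxN y hyN
      omega
    exact mem_filter.mpr ⟨hyN, hyj⟩

end TopSum

section PairSumBound

variable {p : ℕ} [Fact p.Prime]

theorem pairSum_indicator_le_sum_min_hookSizes (A B C : Finset (ZMod p)) (hAB : #A + #B ≤ p) :
    pairSum A B (fun x => if x ∈ C then 1 else 0) ≤ ((hookSizes #A #B).map (min #C)).sum := by
  obtain ⟨T, hTA, hTB, hsum⟩ := exists_sum_min_hookSizes_eq #C #A #B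
  rw [hsum]
  refine pairSum_indicator_le_of_card_add_card_le_minOrder A B C ?_ hTA hTB
  rw [ZMod.minOrder_of_prime Fact.out]
  exact_mod_cast hAB

theorem pairSum_le_sum_topSum_hookSizes (A B : Finset (ZMod p)) (hAB : #A + #B ≤ p)
    (h : ZMod p → ℕ) :
    pairSum A B h ≤ ((hookSizes #A #B).map fun m => topSum m h).sum := by
  set K := ∑ y, h y
  have hK (x : ZMod p) : h x ≤ K := single_le_sum_of_canonicallyOrdered (mem_univ x)
  calc pairSum A B h
      = pairSum A B (fun x => ∑ j ∈ range K, if j < h x then 1 else 0) := by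
        simp only [← eq_sum_range_indicator_lt (hK _)]
    _ = ∑ j ∈ range K, pairSum A B (fun x => if j < h x then 1 else 0) := pairSum_sum ..
    _ ≤ ∑ j ∈ range K, ((hookSizes #A #B).map (min #{x | j < h x})).sum :=
        sum_le_sum fun j _ => by
          simpa using pairSum_indicator_le_sum_min_hookSizes A B {x | j < h x} hAB
    _ = ((hookSizes #A #B).map fun m => ∑ j ∈ range K, min #{x | j < h x} m).sum :=
        Multiset.sum_map_sum.symm
    _ ≤ ((hookSizes #A #B).map fun m => topSum m h).sum := by
        refine Multiset.sum_map_le_sum_map _ _ fun m hm => ?_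
        have := lt_add_of_mem_hookSizes hm
        exact sum_min_card_superlevel_le_topSum (by rw [ZMod.card]; omega) hK

theorem pairSum_le_sum_topSum_layerSizes (A B : Finset (ZMod p)) (h : ZMod p → ℕ) :
    pairSum A B h ≤ ((layerSizes p #A #B).map fun m => topSum m h).sum := by
  unfold layerSizes
  split_ifs with hAB
  · exact pairSum_le_sum_topSum_hookSizes A B hAB h
  · have hA : #Aᶜ = p - #A := by rw [card_compl, ZMod.card]
    have hB : #Bᶜ = p - #B := by rw [card_compl, ZMod.card]
    have htop : topSum p h = ∑ x, h x := by simpa only [ZMod.card] using topSum_card h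
    rw [pairSum_eq_add_pairSum_compl_compl _ _ (by rw [ZMod.card]; omega), ZMod.card,
      Multiset.map_add, Multiset.sum_add, Multiset.map_replicate, Multiset.sum_replicate,
      htop, smul_eq_mul, ← hA, ← hB]
    gcongr
    exact pairSum_le_sum_topSum_hookSizes _ _ (by omega) h

end PairSumBound

section TupleSum

/-- The sum of `h` over the multiset `B 0 + ⋯ + B (k - 1)`. -/
def tupleSum {G M : Type*} [AddCommMonoid G] [AddCommMonoid M] {k : ℕ} (B : Fin k → Finset G)
    (h : G → M) : M :=
  ∑ y ∈ Fintype.piFinset B, h (∑ i, y i)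

theorem sum_piFinset_succ {α M : Type*} [AddCommMonoid M] {k : ℕ} (B : Fin (k + 1) → Finset α)
    (f : (Fin (k + 1) → α) → M) :
    ∑ y ∈ Fintype.piFinset B, f y =
      ∑ y ∈ Fintype.piFinset (Fin.tail B), ∑ z ∈ B 0, f (Fin.cons z y) := by
  rw [← sum_product_right']
  refine sum_equiv (Fin.consEquiv fun _ => α).symm (fun y => ?_) fun y _ => ?_
  · rw [mem_product]
    exact Fin.mem_piFinset_iff_zero_tail
  · exact congrArg f (Fin.cons_self_tail y).symm

theorem tupleSum_succ {G M : Type*} [AddCommMonoid G] [AddCommMonoid M] {k : ℕ}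
    (B : Fin (k + 1) → Finset G) (h : G → M) :
    tupleSum B h = tupleSum (Fin.tail B) fun y => ∑ z ∈ B 0, h (y + z) := by
  simp only [tupleSum, sum_piFinset_succ, Fin.sum_univ_succ, Fin.cons_zero, Fin.cons_succ, add_comm]

/-- The sizes, with multiplicity, of the intervals with a common centre whose union as multisets is
the sum of the multisets `[a 0], …, [a (k - 1)]` in `ZMod p`. The empty sum is `{0}`, of
size `1`. -/
def tupleLayerSizes (p : ℕ) : {k : ℕ} → (Fin k → ℕ) → Multiset ℕ
  | 0, _ => {1}
  | _ + 1, a => (tupleLayerSizes p (Fin.tail a)).bind fun n => layerSizes p n (a 0)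

variable {p : ℕ} {k : ℕ}

theorem le_of_mem_tupleLayerSizes [NeZero p] {a : Fin k → ℕ} (ha : ∀ i, a i ≤ p) {m : ℕ}
    (hm : m ∈ tupleLayerSizes p a) : m ≤ p := by
  induction k generalizing m with
  | zero =>
    rw [tupleLayerSizes, Multiset.mem_singleton] at hm
    exact hm.trans_le (NeZero.one_le)
  | succ k ih =>
    obtain ⟨n, hn, hm⟩ := Multiset.mem_bind.mp hm
    exact le_of_mem_layerSizes (ih (fun i => ha i.succ) hn) (ha 0) hm

theorem tupleSum_interval [NeZero p] {a : Fin k → ℕ} (ha : ∀ i, a i ≤ p) (h : ZMod p → ℕ) :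
    tupleSum (fun i => interval 0 (a i)) h = ((tupleLayerSizes p a).map fun m =>
      ∑ x ∈ centeredInterval p (1 + ∑ i, ((a i : ℤ) - 1)) m, h x).sum := by
  induction k generalizing h with
  | zero => simp [tupleSum, tupleLayerSizes, centeredInterval, interval]
  | succ k ih =>
    have ha_tail (i : Fin k) : Fin.tail a i ≤ p := ha i.succ
    have hcenter : 1 + ∑ i, ((a i : ℤ) - 1) =
        1 + ∑ i, ((Fin.tail a i : ℤ) - 1) + a 0 - 1 := by
      rw [Fin.sum_univ_succ]
      simp only [Fin.tail]
      ring
    rw [tupleSum_succ, tupleLayerSizes, Multiset.map_bind, Multiset.sum_bind, hcenter]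
    refine (ih ha_tail _).trans (congrArg _ (Multiset.map_congr rfl fun n hn => ?_))
    exact pairSum_centeredInterval _ (le_of_mem_tupleLayerSizes ha_tail hn) (ha 0) h

theorem tupleSum_le_sum_topSum [Fact p.Prime] (B : Fin k → Finset (ZMod p)) (h : ZMod p → ℕ) :
    tupleSum B h ≤ ((tupleLayerSizes p fun i => #(B i)).map fun m => topSum m h).sum := by
  induction k generalizing h with
  | zero =>
    simpa [tupleSum, tupleLayerSizes] using sum_le_topSum {(0 : ZMod p)} h
  | succ k ih =>
    rw [tupleSum_succ, tupleLayerSizes, Multiset.map_bind, Multiset.sum_bind]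
    refine (ih (Fin.tail B) _).trans (Multiset.sum_map_le_sum_map _ _ fun n hn => ?_)
    have hB (i : Fin k) : #(Fin.tail B i) ≤ p := (card_le_univ _).trans_eq (ZMod.card p)
    obtain ⟨N, rfl, hN⟩ := exists_card_eq_and_topSum_eq
      ((le_of_mem_tupleLayerSizes hB hn).trans_eq (ZMod.card p).symm)
      fun y => ∑ z ∈ B 0, h (y + z)
    rw [hN]
    exact pairSum_le_sum_topSum_layerSizes N (B 0) h

theorem tupleSum_interval_indicator_centeredInterval [NeZero p] {a : Fin k → ℕ}
    (ha : ∀ i, a i ≤ p) {n : ℕ} (hn : n ≤ p) :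
    tupleSum (fun i => interval 0 (a i))
      (fun x => if x ∈ centeredInterval p (1 + ∑ i, ((a i : ℤ) - 1)) n then 1 else 0) =
      ((tupleLayerSizes p a).map (min · n)).sum := by
  rw [tupleSum_interval ha]
  exact congrArg _ (Multiset.map_congr rfl fun m hm =>
    sum_indicator_centeredInterval _ (le_of_mem_tupleLayerSizes ha hm) hn)

theorem tupleSum_indicator_le [Fact p.Prime] (B : Fin k → Finset (ZMod p)) (C : Finset (ZMod p)) :
    tupleSum B (fun x => if x ∈ C then 1 else 0) ≤
      ((tupleLayerSizes p fun i => #(B i)).map (min · #C)).sum :=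
  (tupleSum_le_sum_topSum B _).trans
    (Multiset.sum_map_le_sum_map _ _ fun m _ => topSum_indicator_le m C)

theorem scount_eq_tupleSum (A : Fin (k + 1) → Finset (ZMod p)) :
    scount A = tupleSum (Fin.tail A) fun x => if x ∈ A 0 then 1 else 0 := by
  rw [scount, card_filter, sum_piFinset_succ]
  simp only [Fin.cons_zero, Fin.cons_succ, sum_ite_eq', tupleSum]

theorem scount_add_tupleSum_compl [NeZero p] (A : Fin (k + 1) → Finset (ZMod p)) :
    scount A + tupleSum (Fin.tail A) (fun x => if x ∈ (A 0)ᶜ then 1 else 0) =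
      ∏ i : Fin k, #(A i.succ) := by
  rw [scount_eq_tupleSum, tupleSum, tupleSum, ← sum_add_distrib]
  refine Eq.trans (sum_congr rfl fun y _ => ?_)
    ((card_eq_sum_ones _).symm.trans (Fintype.card_piFinset _))
  by_cases hy : ∑ i, y i ∈ A 0 <;> simp [hy]

theorem exists_compl_interval_eq_centeredInterval [NeZero p] (d : ℤ) {n : ℕ} (hn : n ≤ p) :
    ∃ t : ZMod p, (interval t n)ᶜ = centeredInterval p d (p - n) := by
  refine ⟨((d - p - n) / 2 : ℤ), ?_⟩
  rw [← sub_add_cancel d p, ← compl_centeredInterval _ hn, sub_add_cancel]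
  rfl

end TupleSum

theorem stmt_5 (p : ℕ) (hp : p.Prime) (k : ℕ) (hk : 1 ≤ k)
    (a : Fin (k + 1) → ℕ) (ha : ∀ i, a i ≤ p) :
    ∃ t : ZMod p,
      ∀ B : Fin (k + 1) → Finset (ZMod p), (∀ i, (B i).card = a i) →
        scount (fun i => if i = 0 then interval t (a 0) else interval 0 (a i)) ≤ scount B := by
  have : Fact p.Prime := ⟨hp⟩
  have ha_tail (i : Fin k) : a i.succ ≤ p := ha i.succ
  obtain ⟨t, ht⟩ := exists_compl_interval_eq_centeredInterval
    (1 + ∑ i : Fin k, ((a i.succ : ℤ) - 1)) (ha 0)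
  refine ⟨t, fun B hB => ?_⟩
  have hcompl : #(B 0)ᶜ = p - a 0 := by rw [card_compl, ZMod.card, hB]
  have interval_total :=
    scount_add_tupleSum_compl fun i => if i = 0 then interval t (a 0) else interval 0 (a i)
  have total := scount_add_tupleSum_compl B
  have interval_value := tupleSum_interval_indicator_centeredInterval ha_tail (Nat.sub_le p (a 0))
  have bound := tupleSum_indicator_le (Fin.tail B) (B 0)ᶜ
  simp only [Fin.tail_def, Fin.succ_ne_zero, if_false, if_true, card_interval _ (ha _), ht,
    interval_value] at interval_total
  simp only [Fin.tail_def, hB, hcompl] at total bound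
  omega
end
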